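/- arXiv:1705.06213 — 2 statements merged into one kernel-verified Lean document; each statement's English description precedes it below -/
import Mathlib

section
/- Let G be a group acting without edge inversions on a simplicial tree T, and let h1, h2 ∈ G be hyperbolic elements with Axis(h1) ≠ Axis(h2). Then either the pair {h1, h2} or the pair {h1^{−1}, h2} freely generates a rank 2 free subsemigroup of G. -/
open SimpleGraph Pointwise

section TreeDefs

variable {G : Type*} [Group G]

/-- The action of `G` on the vertices preserves adjacency. -/
def ActsByAut (G : Type*) [Group G] {V : Type*} [MulAction G V] (T : SimpleGraph V) : Prop :=
  ∀ (g : G) (v w : V), T.Adj v w → T.Adj (g • v) (g • w)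

/-- The action has no edge inversions: no element swaps the endpoints of an edge. -/
def NoEdgeInversion (G : Type*) [Group G] {V : Type*} [MulAction G V] (T : SimpleGraph V) : Prop :=
  ∀ (g : G) (v w : V), T.Adj v w → ¬(g • v = w ∧ g • w = v)

/-- The set of vertices fixed by `g`. -/
def Fixed (V : Type*) [MulAction G V] (g : G) : Set V := {v | g • v = v}

/-- `g` is elliptic: it fixes some vertex. -/
def IsElliptic (V : Type*) [MulAction G V] (g : G) : Prop := ∃ v : V, g • v = v

/-- `g` is hyperbolic: it fixes no vertex. -/
def IsHyperbolic (V : Type*) [MulAction G V] (g : G) : Prop := ¬ ∃ v : V, g • v = v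

/-- Translation length of `g`: the infimum of `d(v, g • v)` over all vertices `v`. -/
noncomputable def transLen {V : Type*} [MulAction G V] (T : SimpleGraph V) (g : G) : ℕ :=
  ⨅ v : V, T.dist v (g • v)

/-- The axis of a (hyperbolic) element: the vertices moved exactly the translation length. -/
noncomputable def Axis {V : Type*} [MulAction G V] (T : SimpleGraph V) (g : G) : Set V :=
  {v | T.dist v (g • v) = transLen T g}

/-- Diameter (in `ℕ∞`) of a set of vertices: the sup of pairwise simplicial distances. -/
noncomputable def setDiam {V : Type*} (T : SimpleGraph V) (S : Set V) : ℕ∞ :=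
  ⨆ v ∈ S, ⨆ w ∈ S, (T.dist v w : ℕ∞)

/-- Minimal simplicial distance between two sets of vertices. -/
noncomputable def setDist {V : Type*} (T : SimpleGraph V) (A B : Set V) : ℕ :=
  sInf {n : ℕ | ∃ v ∈ A, ∃ w ∈ B, T.dist v w = n}

/-- The action of `G` on `T` is `k`-acylindrical: the fixed-point set of every nontrivial
elliptic element has diameter at most `k`. -/
def AcylindricalAction {V : Type*} (T : SimpleGraph V) (G : Type*) [Group G] [MulAction G V]
    (k : ℕ) : Prop :=
  ∀ g : G, g ≠ 1 → IsElliptic V g → setDiam T (Fixed V g) ≤ (k : ℕ∞)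

/-- `a` and `b` generate a rank 2 free product in `G`: the canonical homomorphism
`⟨a⟩ ∗ ⟨b⟩ → G` from the free product of the cyclic subgroups generated by `a` and `b`
is injective. -/
def IsRank2FreeProduct {G : Type*} [Group G] (a b : G) : Prop :=
  Function.Injective
    (Monoid.Coprod.lift (Subgroup.zpowers a).subtype (Subgroup.zpowers b).subtype)

/-- `a` and `b` freely generate a rank 2 free subgroup of `G`: the homomorphism from the
free group on two generators sending the generators to `a` and `b` is injective. -/
def FreelyGeneratesFreeSubgroup {G : Type*} [Group G] (a b : G) : Prop :=
  Function.Injective ((FreeGroup.lift (fun i : Bool => if i then a else b)) : FreeGroup Bool →* G)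

/-- `a` and `b` freely generate a rank 2 free subsemigroup of `G`: the monoid homomorphism
from the free monoid on two generators sending the generators to `a` and `b` is injective. -/
def FreelyGeneratesFreeSubsemigroup {G : Type*} [Monoid G] (a b : G) : Prop :=
  Function.Injective ((FreeMonoid.lift (fun i : Bool => if i then a else b)) : FreeMonoid Bool →* G)

/-- A line in a simplicial tree: the image of an isometric embedding of `ℤ`. -/
def IsLine {V : Type*} (T : SimpleGraph V) (L : Set V) : Prop :=
  ∃ f : ℤ → V, (∀ m n : ℤ, T.dist (f m) (f n) = (m - n).natAbs) ∧ L = Set.range f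

end TreeDefs

theorem pp_word {G V : Type*} [Group G] [MulAction G V] (c : Bool → G) (X : Bool → Set V)
    (hm : ∀ i j, ∀ x ∈ X j, c i • x ∈ X i) (l : List Bool) :
    ∀ i, ∀ j, ∀ x ∈ X j, ((i :: l).map c).prod • x ∈ X i := by
  induction l with
  | nil => intro i j x hx; simpa using hm i j x hx
  | cons k l ih =>
    intro i j x hx
    rw [List.map_cons, List.prod_cons, mul_smul]
    exact hm i k _ (ih k j x hx)

theorem pp_list {G V : Type*} [Group G] [MulAction G V] (c : Bool → G) (X : Bool → Set V)
    (hm : ∀ i j, ∀ x ∈ X j, c i • x ∈ X i) (hne : ∀ i, (X i).Nonempty)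
    (hd : ∀ i j, ∀ x, x ∈ X i → x ∈ X j → i = j) (l : List Bool) :
    ∀ l' : List Bool, (l.map c).prod = (l'.map c).prod → l = l' := by
  have key : ∀ i l, (((i :: l : List Bool).map c).prod) ≠ 1 := by
    intro i l h
    obtain ⟨x, hx⟩ := hne (!i)
    have := pp_word c X hm l i _ x hx
    rw [h, one_smul] at this
    have := hd _ _ _ this hx
    cases i <;> simp at this
  induction l with
  | nil =>
    intro l' h
    cases l' with
    | nil => rfl
    | cons i l' => exact absurd h.symm (key i l')
  | cons i l ih =>
    intro l' h
    cases l' with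
    | nil => exact absurd h (key i l)
    | cons j l' =>
      obtain ⟨x, hx⟩ := hne true
      have h1 := pp_word c X hm l i _ x hx
      have h2 := pp_word c X hm l' j _ x hx
      rw [h] at h1
      have hij := hd _ _ _ h1 h2
      subst hij
      simp only [List.map_cons, List.prod_cons, mul_right_inj] at h
      rw [ih l' h]

theorem free_iff {G : Type*} [Group G] (a b : G) :
    FreelyGeneratesFreeSubsemigroup a b ↔ ∀ l l' : List Bool,
      (l.map (fun i : Bool => if i then a else b)).prod =
        (l'.map (fun i : Bool => if i then a else b)).prod → l = l' := by
  constructor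
  · intro h l l' e
    have := @h (FreeMonoid.ofList l) (FreeMonoid.ofList l')
      (by simpa [FreeMonoid.lift_apply] using e)
    exact FreeMonoid.ofList.injective this
  · intro h l l' e
    rw [FreeMonoid.lift_apply, FreeMonoid.lift_apply] at e
    exact FreeMonoid.toList.injective (h _ _ e)

theorem free_swap {G : Type*} [Group G] {a b : G}
    (h : FreelyGeneratesFreeSubsemigroup a b) : FreelyGeneratesFreeSubsemigroup b a := by
  rw [free_iff] at h ⊢
  intro l l' e
  have key : ∀ l : List Bool, l.map (fun i : Bool => if i then b else a) =
      (l.map not).map (fun i : Bool => if i then a else b) := by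
    intro l
    rw [List.map_map]
    apply List.map_congr_left
    intro i _
    cases i <;> simp
  rw [key, key] at e
  have := h _ _ e
  exact (List.map_injective_iff.2 Bool.not_injective) this

theorem free_inv {G : Type*} [Group G] {a b : G}
    (h : FreelyGeneratesFreeSubsemigroup a b) : FreelyGeneratesFreeSubsemigroup a⁻¹ b⁻¹ := by
  rw [free_iff] at h ⊢
  intro l l' e
  have key : ∀ l : List Bool, (l.map (fun i : Bool => if i then a⁻¹ else b⁻¹)).prod =
      ((l.reverse.map (fun i : Bool => if i then a else b)).prod)⁻¹ := by
    intro l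
    rw [List.prod_inv_reverse, List.map_reverse, List.map_reverse, List.reverse_reverse, List.map_map]
    congr 1
    apply List.map_congr_left
    intro i _
    cases i <;> simp
  rw [key, key, inv_inj] at e
  exact List.reverse_injective (h _ _ e)

theorem tree_unique {V : Type*} {T : SimpleGraph V} (hT : T.IsTree) {x u a b : V}
    (ha : T.Adj a u) (hb : T.Adj b u) (da : T.dist x a + 1 = T.dist x u)
    (db : T.dist x b + 1 = T.dist x u) : a = b := by
  obtain ⟨p, hp⟩ := hT.1.exists_walk_length_eq_dist x a
  obtain ⟨q, hq⟩ := hT.1.exists_walk_length_eq_dist x b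
  have h1 : (p.concat ha).IsPath := Walk.isPath_of_length_eq_dist _ (by simp; omega)
  have h2 : (q.concat hb).IsPath := Walk.isPath_of_length_eq_dist _ (by simp; omega)
  have := (hT.existsUnique_path x u).unique h1 h2
  exact (Walk.concat_inj this).1

theorem tree_step {V : Type*} {T : SimpleGraph V} (hT : T.IsTree) {x u a b : V}
    (ha : T.Adj a u) (hb : T.Adj b u) (hab : a ≠ b) (da : T.dist x a + 1 = T.dist x u) :
    T.dist x b = T.dist x u + 1 := by
  rcases hT.dist_eq_dist_add_one_of_adj x hb with h | h
  · exact h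
  · exact absurd (tree_unique hT ha hb da h.symm) hab

theorem tree_pred {V : Type*} {T : SimpleGraph V} (hT : T.IsTree) {v w : V} {k : ℕ}
    (h : T.dist v w = k + 1) : ∃ c, T.Adj c w ∧ T.dist v c = k := by
  obtain ⟨p, hp⟩ := hT.1.exists_walk_length_eq_dist v w
  have hnn : ¬ p.Nil := by
    intro hn
    have := Walk.nil_iff_length_eq.1 hn
    omega
  refine ⟨p.penultimate, p.adj_penultimate hnn, ?_⟩
  have h1 : T.dist v p.penultimate ≤ k := by
    have := dist_le p.dropLast
    have h2 : p.dropLast.length + 1 = p.length := p.length_dropLast_add_one hnn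
    omega
  have h3 : T.dist v w ≤ T.dist v p.penultimate + T.dist p.penultimate w := hT.1.dist_triangle
  have h4 := dist_eq_one_iff_adj.2 (p.adj_penultimate hnn)
  omega

/-- `x` and `w` on opposite sides of the edge `u v`. -/
theorem tree_across {V : Type*} {T : SimpleGraph V} (hT : T.IsTree) {x u v : V}
    (huv : T.Adj u v) (hx : T.dist x u + 1 = T.dist x v) (k : ℕ) : ∀ w, T.dist v w = k →
    T.dist u w = k + 1 → T.dist x w = T.dist x v + k := by
  induction k using Nat.strong_induction_on with
  | _ k ih =>
  intro w hw huw
  match k, ih, hw, huw with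
  | 0, ih, hw, huw =>
    have := (hT.1.dist_eq_zero_iff).1 hw
    subst this; rfl
  | 1, ih, hw, huw =>
    have h1 : T.Adj w v := (dist_eq_one_iff_adj.1 hw).symm
    refine tree_step hT huv h1 ?_ hx
    rintro rfl
    simp at huw
  | k + 2, ih, hw, huw =>
    obtain ⟨c, hc, hvc⟩ := tree_pred hT hw
    obtain ⟨e, he, hve⟩ := tree_pred hT hvc
    have t1 : T.dist u c ≤ T.dist u v + T.dist v c := hT.1.dist_triangle
    have t2 : T.dist u w ≤ T.dist u c + T.dist c w := hT.1.dist_triangle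
    have t3 : T.dist u e ≤ T.dist u v + T.dist v e := hT.1.dist_triangle
    have t4 : T.dist u c ≤ T.dist u e + T.dist e c := hT.1.dist_triangle
    have a1 := dist_eq_one_iff_adj.2 huv
    have a2 := dist_eq_one_iff_adj.2 hc
    have a3 := dist_eq_one_iff_adj.2 he
    have i1 := ih (k + 1) (by omega) c hvc (by omega)
    have i2 := ih k (by omega) e hve (by omega)
    have := tree_step (x := x) hT he hc.symm (by rintro rfl; omega) (by omega)
    omega

theorem tdist_smul {G V : Type*} [Group G] [MulAction G V] {T : SimpleGraph V} (hT : T.IsTree)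
    (hAct : ActsByAut G T) (g : G) (v w : V) : T.dist (g • v) (g • w) = T.dist v w := by
  have key : ∀ (g : G) (v w : V), T.dist (g • v) (g • w) ≤ T.dist v w := by
    intro g v w
    obtain ⟨p, hp⟩ := hT.1.exists_walk_length_eq_dist v w
    let φ : T →g T := ⟨fun v => g • v, fun h => hAct g _ _ h⟩
    have := dist_le (p.map φ)
    rw [Walk.length_map, hp] at this
    exact this
  apply le_antisymm (key g v w)
  have := key g⁻¹ (g • v) (g • w)
  simpa using this

structure TLine {G V : Type*} [Group G] [MulAction G V] (T : SimpleGraph V) (h : G)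
    (f : ℤ → V) (t : ℤ) : Prop where
  pos : 0 < t
  adj : ∀ n, T.Adj (f n) (f (n + 1))
  nb : ∀ n, f (n + 2) ≠ f n
  tr : ∀ n, h • f n = f (n + t)

theorem TLine.rev {G V : Type*} [Group G] [MulAction G V] {T : SimpleGraph V} {h : G}
    {f : ℤ → V} {t : ℤ} (L : TLine T h f t) : TLine T h⁻¹ (fun n => f (-n)) t where
  pos := L.pos
  adj n := by
    have := L.adj (-(n + 1))
    rw [show -(n + 1) + 1 = -n by ring] at this
    exact this.symm
  nb n := by
    have := L.nb (-(n + 2))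
    rw [show -(n + 2) + 2 = -n by ring] at this
    exact this.symm
  tr n := by
    rw [inv_smul_eq_iff, L.tr]
    congr 1; ring

/-- half trees -/
def HT {V : Type*} (T : SimpleGraph V) (f : ℤ → V) (n : ℤ) : Set V :=
  {x | T.dist x (f (n + 1)) + 1 = T.dist x (f n)}

theorem TLine.anti {G V : Type*} [Group G] [MulAction G V] {T : SimpleGraph V} (hT : T.IsTree)
    {h : G} {f : ℤ → V} {t : ℤ} (L : TLine T h f t) (n : ℤ) (k : ℕ) :
    HT T f (n + k) ⊆ HT T f n := by
  induction k with
  | zero => simp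
  | succ k ih =>
    refine subset_trans ?_ ih
    intro x hx
    have e1 : n + (k + 1 : ℕ) = (n + k) + 1 := by push_cast; ring
    rw [e1] at hx
    generalize n + (k : ℤ) = m at hx
    unfold HT at hx ⊢
    simp only [Set.mem_ofPred_eq] at hx ⊢
    rw [show m + 1 + 1 = m + 2 by ring] at hx
    have h1 := L.adj (m + 1)
    rw [show m + 1 + 1 = m + 2 by ring] at h1
    exact (tree_step hT h1.symm (L.adj m) (L.nb m) hx).symm

theorem TLine.push {G V : Type*} [Group G] [MulAction G V] {T : SimpleGraph V} (hT : T.IsTree)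
    (hAct : ActsByAut G T)
    {h : G} {f : ℤ → V} {t : ℤ} (L : TLine T h f t) (m : ℤ) (x : V) (hx : x ∈ HT T f (m - 1)) :
    h • x ∈ HT T f m := by
  have h1 : h • x ∈ HT T f (m - 1 + t) := by
    unfold HT at hx ⊢
    simp only [Set.mem_ofPred_eq] at hx ⊢
    rw [← L.tr, show m - 1 + t + 1 = (m - 1 + 1) + t by ring, ← L.tr, tdist_smul hT hAct,
      tdist_smul hT hAct]
    exact hx
  have hp := L.pos
  apply L.anti hT m (t - 1).toNat
  rwa [show m + ((t - 1).toNat : ℤ) = m - 1 + t by rw [Int.toNat_of_nonneg] <;> omega]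

theorem mem_up {V : Type*} {T : SimpleGraph V} (hT : T.IsTree) {x u v w w' : V} {k : ℕ}
    (huv : T.Adj u v) (hw : T.Adj w w') (hk : T.dist v w = k) (hd : T.dist u w' = k + 2)
    (hx : T.dist x u + 1 = T.dist x v) : T.dist x w' = T.dist x w + 1 := by
  have a1 := dist_eq_one_iff_adj.2 huv
  have a2 := dist_eq_one_iff_adj.2 hw
  have t1 : T.dist u w ≤ T.dist u v + T.dist v w := hT.1.dist_triangle
  have t2 : T.dist u w' ≤ T.dist u w + T.dist w w' := hT.1.dist_triangle
  have t3 : T.dist v w' ≤ T.dist v w + T.dist w w' := hT.1.dist_triangle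
  have t4 : T.dist u w' ≤ T.dist u v + T.dist v w' := hT.1.dist_triangle
  have := tree_across hT huv hx k w hk (by omega)
  have := tree_across hT huv hx (k + 1) w' (by omega) (by omega)
  omega

theorem main_local {G V : Type*} [Group G] [MulAction G V] {T : SimpleGraph V} (hT : T.IsTree)
    (hAct : ActsByAut G T) {h1 h2 : G} {f1 f2 : ℤ → V} {t1 t2 : ℤ}
    (L1 : TLine T h1 f1 t1) (L2 : TLine T h2 f2 t2) (m b : ℤ) (k : ℕ)
    (hk : T.dist (f1 m) (f2 b) = k)
    (hpp : T.dist (f1 (m + 1)) (f2 (b + 1)) = k + 2)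
    (hpm : T.dist (f1 (m + 1)) (f2 (b - 1)) = k + 2)
    (hmp : T.dist (f1 (m - 1)) (f2 (b + 1)) = k + 2) :
    FreelyGeneratesFreeSubsemigroup h1 h2 := by
  have a1 := L1.adj m
  have a1' := L1.adj (m - 1)
  have a2 := L2.adj b
  have a2' := L2.adj (b - 1)
  rw [sub_add_cancel] at a1' a2'
  have hsub12 : HT T f1 m ⊆ HT T f2 (b - 1) := by
    intro x hx
    have := mem_up hT a1.symm a2'.symm hk hpm hx
    simp only [HT, Set.mem_ofPred_eq, sub_add_cancel]
    exact this.symm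
  have hsub21 : HT T f2 b ⊆ HT T f1 (m - 1) := by
    intro x hx
    have := mem_up hT a2.symm a1'.symm (k := k) ((SimpleGraph.dist_comm).trans hk)
      ((SimpleGraph.dist_comm).trans hmp) hx
    simp only [HT, Set.mem_ofPred_eq, sub_add_cancel]
    exact this.symm
  have hself : ∀ {h : G} {f : ℤ → V} {t : ℤ}, TLine T h f t → ∀ m, HT T f m ⊆ HT T f (m - 1) := by
    intro h f t L m
    have := L.anti hT (m - 1) 1
    simpa using this
  have hdis : ∀ x, x ∈ HT T f1 m → x ∈ HT T f2 b → False := by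
    intro x hx hx'
    have := mem_up hT a1.symm a2 hk hpp hx
    simp only [HT, Set.mem_ofPred_eq] at hx'
    omega
  have hne : ∀ {h : G} {f : ℤ → V} {t : ℤ}, TLine T h f t → ∀ m, (HT T f m).Nonempty := by
    intro h f t L m
    refine ⟨f (m + 1), ?_⟩
    simp only [HT, Set.mem_ofPred_eq, SimpleGraph.dist_self]
    exact (dist_eq_one_iff_adj.2 (L.adj m).symm).symm
  rw [free_iff]
  intro l l'
  refine pp_list _ (fun i : Bool => if i then HT T f1 m else HT T f2 b) ?_ ?_ ?_ l l'
  · rintro (_ | _) (_ | _) x hx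
    · exact L2.push hT hAct b x (hself L2 b hx)
    · exact L2.push hT hAct b x (hsub12 hx)
    · exact L1.push hT hAct m x (hsub21 hx)
    · exact L1.push hT hAct m x (hself L1 m hx)
  · rintro (_ | _)
    · exact hne L2 b
    · exact hne L1 m
  · rintro (_ | _) (_ | _) x hx hx'
    · rfl
    · exact (hdis x hx' hx).elim
    · exact (hdis x hx hx').elim
    · rfl

theorem dist_two {V : Type*} {T : SimpleGraph V} (hT : T.IsTree) {u v w : V}
    (h1 : T.Adj u v) (h2 : T.Adj w v) (hne : u ≠ w) : T.dist u w = 2 := by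
  have := tree_step (x := u) hT h1 h2 hne (by simp [dist_eq_one_iff_adj.2 h1])
  rw [this, dist_eq_one_iff_adj.2 h1]

theorem case_meet {G V : Type*} [Group G] [MulAction G V] {T : SimpleGraph V} (hT : T.IsTree)
    (hAct : ActsByAut G T) {h1 h2 : G} {f1 f2 : ℤ → V} {t1 t2 : ℤ}
    (L1 : TLine T h1 f1 t1) (L2 : TLine T h2 f2 t2) (m b : ℤ) (hmb : f1 m = f2 b)
    (hout : f1 (m + 1) ∉ Set.range f2) :
    FreelyGeneratesFreeSubsemigroup h1 h2 ∨ FreelyGeneratesFreeSubsemigroup h1⁻¹ h2 := by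
  have a1 := L1.adj m
  have a1' := L1.adj (m - 1)
  have a2 := L2.adj b
  have a2' := L2.adj (b - 1)
  rw [sub_add_cancel] at a1' a2'
  rw [hmb] at a1 a1'
  have o1 : f1 (m + 1) ≠ f2 (b + 1) := fun h => hout ⟨_, h.symm⟩
  have o2 : f1 (m + 1) ≠ f2 (b - 1) := fun h => hout ⟨_, h.symm⟩
  have d1 := dist_two hT a1.symm a2.symm o1
  have d2 := dist_two hT a1.symm a2' o2
  by_cases hc : f1 (m - 1) = f2 (b + 1)
  · right
    have hnb := L2.nb (b - 1)
    rw [show b - 1 + 2 = b + 1 by ring] at hnb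
    have d3 := dist_two hT a1' a2' (by rw [hc]; exact hnb)
    have e1 : -(-b + 1) = b - 1 := by ring
    have e2 : -(-b - 1) = b + 1 := by ring
    have := main_local hT hAct L1 L2.rev m (-b) 0 (by simp [hmb])
      (by simp only [e1]; exact d2) (by simp only [e2]; exact d1) (by simp only [e1]; exact d3)
    have := free_inv this
    rwa [inv_inv] at this
  · left
    have d3 := dist_two hT a1' a2.symm hc
    exact main_local hT hAct L1 L2 m b 0 (by simp [hmb]) d1 d2 d3

theorem far_far {V : Type*} {T : SimpleGraph V} (hT : T.IsTree) {u v w w' : V} {k : ℕ}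
    (hv : T.Adj u v) (hw : T.Adj w' w) (hk : T.dist v w = k + 1) (h1 : k + 1 ≤ T.dist u w)
    (h2 : k + 1 ≤ T.dist v w') : T.dist u w' = k + 3 := by
  have h1' : T.dist w u = k + 2 := by
    have := hT.dist_eq_dist_add_one_of_adj w hv
    rw [SimpleGraph.dist_comm (u := w) (v := v), SimpleGraph.dist_comm (u := w) (v := u)] at this
    rw [SimpleGraph.dist_comm]
    omega
  have h2' : T.dist v w' = k + 2 := by
    have := hT.dist_eq_dist_add_one_of_adj v hw
    omega
  obtain ⟨c, hc, hvc⟩ := tree_pred hT hk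
  have t1 : T.dist u c ≤ T.dist u v + T.dist v c := hT.1.dist_triangle
  have t2 : T.dist u w ≤ T.dist u c + T.dist c w := hT.1.dist_triangle
  have a1 := dist_eq_one_iff_adj.2 hv
  have a2 := dist_eq_one_iff_adj.2 hc
  rw [SimpleGraph.dist_comm] at h1'
  have := tree_step (x := u) hT hc hw (by rintro rfl; omega) (by omega)
  omega

theorem case_disjoint {G V : Type*} [Group G] [MulAction G V] {T : SimpleGraph V} (hT : T.IsTree)
    (hAct : ActsByAut G T) {h1 h2 : G} {f1 f2 : ℤ → V} {t1 t2 : ℤ}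
    (L1 : TLine T h1 f1 t1) (L2 : TLine T h2 f2 t2) (hd : ∀ m b, f1 m ≠ f2 b) :
    FreelyGeneratesFreeSubsemigroup h1 h2 := by
  classical
  have hex : ∃ k : ℕ, ∃ m b, T.dist (f1 m) (f2 b) = k := ⟨_, 0, 0, rfl⟩
  obtain ⟨m, b, hk⟩ := Nat.find_spec hex
  have hmin : ∀ m' b', Nat.find hex ≤ T.dist (f1 m') (f2 b') :=
    fun m' b' => Nat.find_min' hex ⟨m', b', rfl⟩
  generalize Nat.find hex = K at hk hmin
  have hpos := hT.1.pos_dist_of_ne (hd m b)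
  obtain ⟨k, rfl⟩ : ∃ k, K = k + 1 := ⟨K - 1, by omega⟩
  have a1 := L1.adj m
  have a1' := L1.adj (m - 1)
  have a2 := L2.adj b
  have a2' := L2.adj (b - 1)
  rw [sub_add_cancel] at a1' a2'
  exact main_local hT hAct L1 L2 m b (k + 1) hk
    (far_far hT a1.symm a2.symm hk (hmin _ _) (hmin _ _))
    (far_far hT a1.symm a2' hk (hmin _ _) (hmin _ _))
    (far_far hT a1' a2.symm hk (hmin _ _) (hmin _ _))

theorem case_all {G V : Type*} [Group G] [MulAction G V] {T : SimpleGraph V} (hT : T.IsTree)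
    (hAct : ActsByAut G T) {h1 h2 : G} {f1 f2 : ℤ → V} {t1 t2 : ℤ}
    (L1 : TLine T h1 f1 t1) (L2 : TLine T h2 f2 t2) (n : ℤ) (hn : f1 n ∉ Set.range f2) :
    FreelyGeneratesFreeSubsemigroup h1 h2 ∨ FreelyGeneratesFreeSubsemigroup h1⁻¹ h2 := by
  by_cases hd : ∀ m b, f1 m ≠ f2 b
  · exact Or.inl (case_disjoint hT hAct L1 L2 hd)
  push Not at hd
  obtain ⟨m0, b0, h0⟩ := hd
  by_cases hup : ∃ m, f1 m ∈ Set.range f2 ∧ f1 (m + 1) ∉ Set.range f2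
  · obtain ⟨m, ⟨b, hb⟩, hm⟩ := hup
    exact case_meet hT hAct L1 L2 m b hb.symm hm
  by_cases hdn : ∃ m, f1 m ∈ Set.range f2 ∧ f1 (m - 1) ∉ Set.range f2
  · obtain ⟨m, ⟨b, hb⟩, hm⟩ := hdn
    have := case_meet hT hAct L1.rev L2 (-m) b (by simp [hb])
      (by simp only [show -(-m + 1) = m - 1 by ring]; exact hm)
    rw [inv_inv] at this
    exact this.symm
  push Not at hup hdn
  exfalso
  apply hn
  have up : ∀ k : ℕ, f1 (m0 + k) ∈ Set.range f2 := by
    intro k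
    induction k with
    | zero => exact ⟨b0, by simp [h0]⟩
    | succ k ih =>
      have := hup _ ih
      push_cast
      rwa [← add_assoc]
  have dn : ∀ k : ℕ, f1 (m0 - k) ∈ Set.range f2 := by
    intro k
    induction k with
    | zero => exact ⟨b0, by simp [h0]⟩
    | succ k ih =>
      have := hdn _ ih
      push_cast
      rwa [← sub_sub]
  rcases le_total m0 n with h | h
  · have := up (n - m0).toNat
    rwa [Int.toNat_of_nonneg (by omega), add_sub_cancel] at this
  · have := dn (m0 - n).toNat
    rwa [Int.toNat_of_nonneg (by omega), sub_sub_cancel] at this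

theorem exists_line {G V : Type*} [Group G] [MulAction G V] {T : SimpleGraph V} (hT : T.IsTree)
    (hAct : ActsByAut G T) (hNoInv : NoEdgeInversion G T) {h : G} (hh : IsHyperbolic V h)
    {v : V} (hv : v ∈ Axis T h) :
    ∃ (f : ℤ → V) (t : ℤ), TLine T h f t ∧ f 0 = v ∧ Set.range f ⊆ Axis T h := by
  have hv' : T.dist v (h • v) = transLen T h := hv
  have hmin : ∀ w, transLen T h ≤ T.dist w (h • w) := fun w => ciInf_le (OrderBot.bddBelow _) w
  generalize ht : transLen T h = τ at hv' hmin
  have hτ : 0 < τ := by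
    rw [← hv']
    exact hT.1.pos_dist_of_ne (fun e => hh ⟨v, e.symm⟩)
  obtain ⟨p, hp⟩ := hT.1.exists_walk_length_eq_dist v (h • v)
  rw [hv'] at hp
  have hpath : p.IsPath := p.isPath_of_length_eq_dist (by rw [hp, hv'])
  obtain ⟨c, hc⟩ : ∃ c : ℕ → V, c = p.getVert := ⟨_, rfl⟩
  have c0 : c 0 = v := by simp [hc]
  have cτ : c τ = h • v := by rw [hc, ← hp]; simp
  have cadj : ∀ i < τ, T.Adj (c i) (c (i + 1)) := by
    intro i hi; rw [hc]; exact p.adj_getVert_succ (by omega)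
  have cinj : ∀ i j, i ≤ τ → j ≤ τ → c i = c j → i = j := by
    intro i j hi hj e
    rw [hc] at e
    exact hpath.getVert_injOn (by simp; omega) (by simp; omega) e
  let f : ℤ → V := fun n => h ^ (n / τ) • c (n % τ).toNat
  have hf : ∀ (q : ℤ) (r : ℕ), r ≤ τ → f (q * τ + r) = h ^ q • c r := by
    intro q r hr
    have hτ' : (τ : ℤ) ≠ 0 := by omega
    rcases hr.lt_or_eq with hr | rfl
    · have e1 : (q * τ + r) / (τ : ℤ) = q := by
        rw [add_comm, Int.add_mul_ediv_right _ _ hτ', Int.ediv_eq_zero_of_lt] <;> omega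
      have e2 : (q * τ + r) % (τ : ℤ) = r := by
        rw [add_comm, Int.add_mul_emod_self_right, Int.emod_eq_of_lt] <;> omega
      simp only [f, e1, e2, Int.toNat_natCast]
    · have e1 : (q * r + r) / (r : ℤ) = q + 1 := by
        rw [show q * r + r = (q + 1) * (r : ℤ) by ring, Int.mul_ediv_cancel _ hτ']
      have e2 : (q * r + r) % (r : ℤ) = 0 := by
        rw [show q * r + r = (q + 1) * (r : ℤ) by ring, Int.mul_emod_left]
      simp only [f, e1, e2, Int.toNat_zero]
      rw [c0, cτ, zpow_add_one, mul_smul]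
  have hdec : ∀ n : ℤ, ∃ (q : ℤ) (r : ℕ), r < τ ∧ n = q * τ + r := by
    intro n
    have h1 := Int.emod_nonneg n (b := (τ : ℤ)) (by omega)
    have h2 := Int.emod_lt_of_pos n (b := (τ : ℤ)) (by omega)
    refine ⟨n / τ, (n % τ).toNat, by omega, ?_⟩
    rw [Int.toNat_of_nonneg h1, mul_comm]
    exact (Int.mul_ediv_add_emod n τ).symm
  have fadj : ∀ n, T.Adj (f n) (f (n + 1)) := by
    intro n
    obtain ⟨q, r, hr, rfl⟩ := hdec n
    have := hf q (r + 1) (by omega)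
    push_cast at this
    rw [add_assoc, this, hf q r (by omega)]
    exact hAct _ _ _ (cadj r hr)
  have ftr : ∀ n, h • f n = f (n + τ) := by
    intro n
    obtain ⟨q, r, hr, rfl⟩ := hdec n
    rw [show q * (τ : ℤ) + r + τ = (q + 1) * τ + r by ring, hf _ _ hr.le, hf _ _ hr.le,
      ← mul_smul, add_comm q 1, zpow_one_add]
  have fnb : ∀ n, f (n + 2) ≠ f n := by
    intro n e
    obtain ⟨q, r, hr, rfl⟩ := hdec n
    rw [hf q r hr.le] at e
    by_cases hr2 : r + 2 ≤ τ
    · have := hf q (r + 2) hr2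
      push_cast at this
      rw [add_assoc, this] at e
      have := cinj _ _ hr2 hr.le (smul_left_cancel _ e)
      omega
    · have h1 := hf (q + 1) 1 (by omega)
      have hτr : (τ : ℤ) = r + 1 := by omega
      rw [show q * (τ : ℤ) + r + 2 = (q + 1) * τ + (1 : ℕ) by push_cast; rw [add_mul]; omega,
        h1, zpow_add_one, mul_smul] at e
      have e' := smul_left_cancel _ e
      by_cases hr0 : r = 0
      · subst hr0
        have hτ1 : τ = 1 := by omega
        have c1 : c 1 = h • v := by rw [← cτ, hτ1]
        have := cadj 0 hτ
        rw [zero_add, c0, c1] at this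
        rw [c1, c0] at e'
        exact hNoInv h v (h • v) this ⟨rfl, e'⟩
      · have h2 := hmin (c 1)
        rw [e'] at h2
        have hd : ∀ j : ℕ, j + 1 ≤ τ → T.dist (c 1) (c (1 + j)) ≤ j := by
          intro j
          induction j with
          | zero => simp
          | succ j ih =>
            intro hj
            have t : T.dist (c 1) (c (1 + j + 1)) ≤
              T.dist (c 1) (c (1 + j)) + T.dist (c (1 + j)) (c (1 + j + 1)) := hT.1.dist_triangle
            have := dist_eq_one_iff_adj.2 (cadj (1 + j) (by omega))
            have := ih (by omega)
            rw [show 1 + (j + 1) = 1 + j + 1 by omega]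
            omega
        have := hd (r - 1) (by omega)
        rw [show 1 + (r - 1) = r by omega] at this
        omega
  refine ⟨f, τ, ⟨by exact_mod_cast hτ, fadj, fnb, ftr⟩, ?_, ?_⟩
  · have := hf 0 0 (by omega)
    simpa [c0] using this
  · rintro _ ⟨n, rfl⟩
    change T.dist (f n) (h • f n) = transLen T h
    rw [ht]
    apply le_antisymm _ (hmin _)
    rw [ftr]
    have hd : ∀ j : ℕ, T.dist (f n) (f (n + j)) ≤ j := by
      intro j
      induction j with
      | zero => simp
      | succ j ih =>
        have t : T.dist (f n) (f (n + j + 1)) ≤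
          T.dist (f n) (f (n + j)) + T.dist (f (n + j)) (f (n + j + 1)) := hT.1.dist_triangle
        have := dist_eq_one_iff_adj.2 (fadj (n + j))
        push_cast
        rw [← add_assoc]
        omega
    exact hd τ

theorem axis_nonempty {G V : Type*} [Group G] [MulAction G V] {T : SimpleGraph V}
    (hT : T.IsTree) (h : G) : ∃ v, v ∈ Axis T h := by
  haveI := hT.1.nonempty
  have := Nat.sInf_mem (Set.range_nonempty (fun v : V => T.dist v (h • v)))
  obtain ⟨v, hv⟩ := this
  exact ⟨v, hv⟩

theorem half_case {G V : Type*} [Group G] [MulAction G V] (T : SimpleGraph V)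
    (hT : T.IsTree) (hAct : ActsByAut G T) (hNoInv : NoEdgeInversion G T)
    (h1 h2 : G) (hh1 : IsHyperbolic V h1) (hh2 : IsHyperbolic V h2)
    (v : V) (hv : v ∈ Axis T h1) (hv2 : v ∉ Axis T h2) :
    FreelyGeneratesFreeSubsemigroup h1 h2 ∨ FreelyGeneratesFreeSubsemigroup h1⁻¹ h2 := by
  obtain ⟨w, hw⟩ := axis_nonempty hT h2
  obtain ⟨f1, t1, L1, e1, _⟩ := exists_line hT hAct hNoInv hh1 hv
  obtain ⟨f2, t2, L2, _, r2⟩ := exists_line hT hAct hNoInv hh2 hw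
  exact case_all hT hAct L1 L2 0 (fun hc => hv2 (r2 (e1 ▸ hc)))

/-- If `G` acts without edge inversions on a simplicial tree and `h1, h2`
are hyperbolic with distinct axes, then either `{h1, h2}` or `{h1⁻¹, h2}` freely generates
a rank 2 free subsemigroup of `G`. -/
theorem statement4 {G V : Type*} [Group G] [MulAction G V] (T : SimpleGraph V)
    (hT : T.IsTree) (hAct : ActsByAut G T) (hNoInv : NoEdgeInversion G T)
    (h1 h2 : G) (hh1 : IsHyperbolic V h1) (hh2 : IsHyperbolic V h2)
    (haxes : Axis T h1 ≠ Axis T h2) :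
    FreelyGeneratesFreeSubsemigroup h1 h2 ∨ FreelyGeneratesFreeSubsemigroup h1⁻¹ h2 := by
  by_cases hs : Axis T h1 ⊆ Axis T h2
  · have hs' : ¬ Axis T h2 ⊆ Axis T h1 := fun h => haxes (subset_antisymm hs h)
    obtain ⟨v, hv, hv'⟩ := Set.not_subset.1 hs'
    rcases half_case T hT hAct hNoInv h2 h1 hh2 hh1 v hv hv' with h | h
    · exact Or.inl (free_swap h)
    · right
      have := free_swap (free_inv h)
      rwa [inv_inv] at this
  · obtain ⟨v, hv, hv'⟩ := Set.not_subset.1 hs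
    exact half_case T hT hAct hNoInv h1 h2 hh1 hh2 v hv hv'
end

section
/- Let G be a group acting without edge inversions on a simplicial tree T, let h1, h2 ∈ G be hyperbolic elements, and let n be a positive integer. If diam(Axis(h1) ∩ Axis(h2)) < n·min{τ(h1), τ(h2)} (in particular, if the intersection of the axes is empty), then h1^n and h2^n freely generate a rank 2 free subgroup of G. -/
open SimpleGraph Pointwise

theorem tree_nbr {V : Type*} {T : SimpleGraph V} (hT : T.IsTree) {w u a b : V}
    (ha : T.Adj a u) (hb : T.Adj u b) (hab : a ≠ b) (h : T.dist w u = T.dist w a + 1) :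
    T.dist w b = T.dist w u + 1 := by
  rcases hT.dist_eq_dist_add_one_of_adj w hb with h2 | h2
  · exfalso
    apply hab
    obtain ⟨p, hp⟩ := hT.connected.exists_walk_length_eq_dist w a
    obtain ⟨q, hq⟩ := hT.connected.exists_walk_length_eq_dist w b
    have hp' : (p.concat ha).IsPath := by
      apply Walk.isPath_of_length_eq_dist
      rw [Walk.length_concat]; omega
    have hq' : (q.concat hb.symm).IsPath := by
      apply Walk.isPath_of_length_eq_dist
      rw [Walk.length_concat]; omega
    have := (hT.existsUnique_path w u).unique hp' hq'
    have h3 := congrArg Walk.penultimate this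
    simpa using h3
  · exact h2

theorem tree_through {V : Type*} {T : SimpleGraph V} (hT : T.IsTree) (w v : V) :
    ∀ (k : ℕ) (u u' : V), T.dist v u' = k → T.Adj u u' → T.dist w u' = T.dist w u + 1 →
      T.dist v u = T.dist v u' + 1 → T.dist w v = T.dist w u' + T.dist u' v := by
  intro k
  induction k with
  | zero =>
    intro u u' hk _ _ _
    have : v = u' := (hT.connected.dist_eq_zero_iff).1 hk
    subst this
    simp
  | succ k ih =>
    intro u u' hk hadj h1 h2
    obtain ⟨p, hp⟩ := hT.connected.exists_walk_length_eq_dist u' v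
    cases p with
    | nil => simp at hk
    | @cons _ x _ hx p =>
      have h3 : T.dist x v ≤ p.length := dist_le p
      have h4 := hT.dist_eq_dist_add_one_of_adj v hx
      rw [Walk.length_cons, T.dist_comm] at hp
      rw [T.dist_comm] at h3
      have hne : u ≠ x := by
        rintro rfl
        omega
      have h5 := tree_nbr hT hadj hx hne h1
      have h6 := ih u' x (by omega) hx h5 (by omega)
      rw [h6, h5, T.dist_comm (u := x), T.dist_comm (u := u')]
      omega

theorem line_right {V : Type*} {T : SimpleGraph V} (hT : T.IsTree) (f : ℤ → V)
    (hadj : ∀ t, T.Adj (f t) (f (t + 1))) (hne : ∀ t, f t ≠ f (t + 2)) (v : V) (s : ℤ)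
    (hs : ∀ t, T.dist v (f s) ≤ T.dist v (f t)) (k : ℕ) :
    T.dist v (f (s + k)) = T.dist v (f s) + k ∧
    T.dist v (f (s + k + 1)) = T.dist v (f (s + k)) + 1 := by
  induction k with
  | zero =>
    have h1 := hT.dist_eq_dist_add_one_of_adj v (hadj s)
    have h2 := hs (s + 1)
    simp only [Nat.cast_zero, add_zero, true_and]
    omega
  | succ k ih =>
    obtain ⟨h1, h2⟩ := ih
    have e : s + ((k + 1 : ℕ) : ℤ) = s + k + 1 := by push_cast; ring
    rw [e]
    refine ⟨by omega, ?_⟩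
    refine tree_nbr hT (hadj (s + k)) (hadj _) ?_ h2
    have := hne (s + k)
    rwa [show s + (k : ℤ) + 2 = s + k + 1 + 1 by ring] at this

theorem line_proj {V : Type*} {T : SimpleGraph V} (hT : T.IsTree) (f : ℤ → V)
    (hadj : ∀ t, T.Adj (f t) (f (t + 1))) (hne : ∀ t, f t ≠ f (t + 2)) (v : V) :
    ∃ m s : ℤ, ∀ t, (T.dist v (f t) : ℤ) = m + |t - s| := by
  obtain ⟨s, hs⟩ : ∃ s, ∀ t, T.dist v (f s) ≤ T.dist v (f t) :=
    ⟨Function.argmin (fun t => T.dist v (f t)), fun t => Function.argmin_le (fun t => T.dist v (f t)) t⟩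
  refine ⟨T.dist v (f s), s, fun t => ?_⟩
  rcases le_total s t with h | h
  · obtain ⟨k, rfl⟩ := Int.le.dest h
    have := (line_right hT f hadj hne v s hs k).1
    rw [this]; simp
  · obtain ⟨k, hk⟩ := Int.le.dest h
    have h1 := (line_right hT (fun t => f (-t)) (fun t => ?_) (fun t => ?_) v (-s)
      (fun t => by simpa using hs (-t)) k).1
    · have : -(-s + (k : ℤ)) = t := by omega
      simp only [this, neg_neg] at h1
      rw [h1]
      have : t - s = -k := by omega
      rw [this]; simp
    · have := (hadj (-(t + 1))).symm
      rwa [show -(t + 1) + 1 = -t by ring] at this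
    · have := (hne (-(t + 2))).symm
      rwa [show -(t + 2) + 2 = -t by ring] at this

/-- Bundled data: a bi-infinite geodesic with its nearest point projection. -/
structure LineData {V : Type*} (T : SimpleGraph V) (f : ℤ → V) (m s : V → ℤ) : Prop where
  adj : ∀ t, T.Adj (f t) (f (t + 1))
  proj : ∀ v t, (T.dist v (f t) : ℤ) = m v + |t - s v|

theorem LineData.uniq {V : Type*} {T : SimpleGraph V} {f : ℤ → V} {m s : V → ℤ}
    (L : LineData T f m s) {v : V} {m' s' : ℤ} (h : ∀ t, (T.dist v (f t) : ℤ) = m' + |t - s'|) :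
    m v = m' ∧ s v = s' := by
  have h1 := L.proj v (s v)
  have h2 := L.proj v s'
  rw [h] at h1 h2
  simp only [sub_self, abs_zero, add_zero] at h1 h2
  have h3 := abs_nonneg (s' - s v)
  have h4 := abs_nonneg (s v - s')
  have h5 : |s v - s'| = 0 := by omega
  have := abs_eq_zero.1 h5
  omega

theorem LineData.m_nonneg {V : Type*} {T : SimpleGraph V} {f : ℤ → V} {m s : V → ℤ}
    (L : LineData T f m s) (v : V) : 0 ≤ m v := by
  have h1 := L.proj v (s v)
  simp only [sub_self, abs_zero, add_zero] at h1
  omega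

theorem LineData.self {V : Type*} {T : SimpleGraph V} {f : ℤ → V} {m s : V → ℤ}
    (L : LineData T f m s) (t : ℤ) : m (f t) = 0 ∧ s (f t) = t := by
  have h1 := L.proj (f t) t
  have h2 := L.m_nonneg (f t)
  rw [T.dist_self] at h1
  have h4 := abs_nonneg (t - s (f t))
  have h5 : |t - s (f t)| = 0 := by push_cast at h1; omega
  have := abs_eq_zero.1 h5
  push_cast at h1
  omega

theorem LineData.isom {V : Type*} {T : SimpleGraph V} {f : ℤ → V} {m s : V → ℤ}
    (L : LineData T f m s) (t t' : ℤ) : (T.dist (f t) (f t') : ℤ) = |t' - t| := by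
  rw [L.proj, (L.self t).1, (L.self t).2, zero_add]

theorem LineData.bridge {V : Type*} {T : SimpleGraph V} (hT : T.IsTree) {f : ℤ → V} {m s : V → ℤ}
    (L : LineData T f m s) {v w : V} (h : s v ≠ s w) :
    (T.dist w v : ℤ) = m w + |s v - s w| + m v := by
  have key : ∀ j : ℤ, T.Adj (f j) (f (s v)) → |j - s w| + 1 = |s v - s w| → |j - s v| = 1 →
      (T.dist w v : ℤ) = m w + |s v - s w| + m v := by
    intro j hj h1 h2
    have a1 := L.proj w j
    have a2 := L.proj w (s v)
    have a3 := L.proj v j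
    have a4 := L.proj v (s v)
    simp only [sub_self, abs_zero, add_zero] at a4
    have := tree_through hT w v _ (f j) (f (s v)) rfl hj (by omega) (by omega)
    rw [T.dist_comm (u := f (s v))] at this
    omega
  rcases lt_or_gt_of_ne h with h1 | h1
  · refine key (s v + 1) (L.adj _).symm ?_ (by simp)
    rw [abs_of_nonpos (by omega), abs_of_nonpos (by omega)]; ring
  · refine key (s v - 1) ?_ ?_ (by simp)
    · have := L.adj (s v - 1)
      rwa [sub_add_cancel] at this
    · rw [abs_of_nonneg (by omega), abs_of_nonneg (by omega)]; ring

section Act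

variable {G V : Type*} [Group G] [MulAction G V] {T : SimpleGraph V}

theorem tree_dist_smul_le (hT : T.IsTree) (hAct : ActsByAut G T) (g : G) (v w : V) :
    T.dist (g • v) (g • w) ≤ T.dist v w := by
  obtain ⟨p, hp⟩ := hT.connected.exists_walk_length_eq_dist v w
  rw [← hp]
  let φ : T →g T := ⟨fun x => g • x, fun {a b} h => hAct g a b h⟩
  have := dist_le (p.map φ)
  rw [Walk.length_map] at this
  exact this

theorem dist_smul' (hT : T.IsTree) (hAct : ActsByAut G T) (g : G) (v w : V) :
    T.dist (g • v) (g • w) = T.dist v w := by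
  apply le_antisymm (tree_dist_smul_le hT hAct g v w)
  have := tree_dist_smul_le hT hAct g⁻¹ (g • v) (g • w)
  simpa using this

theorem dist_le_of_adj_chain (hT : T.IsTree) (f : ℤ → V)
    (hadj : ∀ t, T.Adj (f t) (f (t + 1))) (s : ℤ) (k : ℕ) : T.dist (f s) (f (s + k)) ≤ k := by
  induction k with
  | zero => simp
  | succ k ih =>
    have e : s + ((k + 1 : ℕ) : ℤ) = s + k + 1 := by push_cast; ring
    rw [e]
    have h1 := hT.connected.dist_triangle (u := f s) (v := f (s + k)) (w := f (s + k + 1))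
    have h2 := dist_eq_one_iff_adj.2 (hadj (s + k))
    omega

theorem exists_axis (hT : T.IsTree) (hAct : ActsByAut G T) (hNoInv : NoEdgeInversion G T)
    (h : G) (hh : IsHyperbolic V h) : 0 < transLen T h ∧ ∃ f m s, LineData T f m s ∧
      ∀ t, h • f t = f (t + transLen T h) := by
  have hne : Nonempty V := hT.connected.nonempty
  have hmin : ∀ v : V, transLen T h ≤ T.dist v (h • v) := fun v => ciInf_le' _ v
  obtain ⟨v, hv⟩ : ∃ v : V, T.dist v (h • v) = transLen T h :=
    Nat.sInf_mem (Set.range_nonempty (fun v : V => T.dist v (h • v)))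
  set τ := transLen T h with hτ
  have hpos : 0 < τ := by
    rw [← hv]
    exact hT.connected.pos_dist_of_ne (fun e => hh ⟨v, e.symm⟩)
  refine ⟨hpos, ?_⟩
  obtain ⟨p, hp⟩ := hT.connected.exists_walk_length_eq_dist v (h • v)
  rw [hv] at hp
  let f : ℤ → V := fun t => h ^ (t / (τ : ℤ)) • p.getVert (t % (τ : ℤ)).toNat
  have hτ0 : (0 : ℤ) < τ := by exact_mod_cast hpos
  have hper : ∀ t, h • f t = f (t + τ) := by
    intro t
    simp only [f]
    rw [Int.add_ediv_of_dvd_right (dvd_refl _), Int.ediv_self hτ0.ne', Int.add_emod_right,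
      smul_smul, add_comm, zpow_add, zpow_one]
  have hadj : ∀ t, T.Adj (f t) (f (t + 1)) := by
    intro t
    have b1 := Int.emod_nonneg t hτ0.ne'
    have b2 := Int.emod_lt_of_pos t hτ0
    have b3 := Int.emod_add_mul_ediv t τ
    have hA : T.Adj (p.getVert (t % (τ : ℤ)).toNat) (p.getVert ((t % (τ : ℤ)).toNat + 1)) :=
      p.adj_getVert_succ (by omega)
    have hA := hAct (h ^ (t / (τ : ℤ))) _ _ hA
    have : f (t + 1) = h ^ (t / (τ : ℤ)) • p.getVert ((t % (τ : ℤ)).toNat + 1) := by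
      rcases lt_or_eq_of_le (show t % (τ : ℤ) + 1 ≤ τ by omega) with h1 | h1
      · have e : (t + 1) / (τ : ℤ) = t / τ ∧ (t + 1) % (τ : ℤ) = t % τ + 1 := by
          rw [Int.ediv_emod_unique hτ0]
          refine ⟨by linarith, by omega, h1⟩
        simp only [f]
        rw [e.1, e.2, Int.toNat_add b1 zero_le_one]
        rfl
      · have e : (t + 1) / (τ : ℤ) = t / τ + 1 ∧ (t + 1) % (τ : ℤ) = 0 := by
          rw [Int.ediv_emod_unique hτ0]
          refine ⟨by rw [mul_add]; linarith, le_refl _, hτ0⟩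
        have e2 : (t % (τ : ℤ)).toNat + 1 = p.length := by omega
        simp only [f]
        rw [e.1, e.2, e2, Walk.getVert_length, zpow_add, zpow_one, ← smul_smul]
        simp
    rw [this]
    exact hA
  have hne2 : ∀ t, f t ≠ f (t + 2) := by
    intro t ht
    rcases Nat.lt_or_ge τ 2 with h1 | h1
    · have e : τ = 1 := by omega
      refine hNoInv h _ _ (hadj t) ⟨?_, ?_⟩
      · rw [hper, e]; rfl
      · rw [hper, e, ht, add_assoc]; rfl
    · have h2 := hmin (f t)
      rw [hper] at h2
      have h3 := dist_le_of_adj_chain hT f hadj (t + 2) (τ - 2)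
      rw [← ht, show t + 2 + ((τ - 2 : ℕ) : ℤ) = t + τ by omega] at h3
      omega
  choose m s hms using line_proj hT f hadj hne2
  exact ⟨f, m, s, ⟨hadj, hms⟩, hper⟩

theorem axis_mem {h : G} {f : ℤ → V} {m s : V → ℤ} (L : LineData T f m s)
    (hper : ∀ t, h • f t = f (t + transLen T h)) (t : ℤ) : f t ∈ Axis T h := by
  have := L.isom t (t + transLen T h)
  rw [← hper] at this
  simp only [add_sub_cancel_left, Nat.abs_cast] at this
  exact_mod_cast this

theorem pow_per {h : G} {f : ℤ → V} {τ : ℤ}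
    (hper : ∀ t, h • f t = f (t + τ)) (n : ℕ) (t : ℤ) : h ^ n • f t = f (t + n * τ) := by
  induction n with
  | zero => simp
  | succ n ih =>
    rw [pow_succ', ← smul_smul, ih, hper]
    congr 1
    push_cast
    ring

theorem proj_shift (hT : T.IsTree) (hAct : ActsByAut G T) {a : G} {f : ℤ → V} {m s : V → ℤ}
    (L : LineData T f m s) {τ : ℤ} (hper : ∀ t, a • f t = f (t + τ)) (v : V) :
    s (a • v) = s v + τ := by
  refine (L.uniq (m' := m v) (fun t => ?_)).2
  have := hper (t - τ)
  rw [sub_add_cancel] at this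
  rw [← this, dist_smul' hT hAct, L.proj]
  congr 2
  ring

/-- The projection of one line to another has diameter bounded by the overlap. -/
theorem proj_diam (hT : T.IsTree) {f g : ℤ → V} {m s m' s' : V → ℤ}
    (L : LineData T f m s) (L' : LineData T g m' s') {A B : Set V}
    (hA : ∀ t, f t ∈ A) (hB : ∀ t, g t ∈ B) {N : ℕ} (hN : setDiam T (A ∩ B) < (N : ℕ∞)) (i j : ℤ) :
    |s (g i) - s (g j)| < N := by
  by_cases h : s (g i) = s (g j)
  · rw [h, sub_self, abs_zero]
    have : (0 : ℕ∞) < N := lt_of_le_of_lt (zero_le) hN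
    exact_mod_cast this
  · have hb := L.bridge hT h
    have hi := L'.isom j i
    have mem : ∀ x : V, (T.dist x (g i) : ℤ) + T.dist x (g j) = |i - j| → x ∈ B := by
      intro x hx
      rw [L'.proj, L'.proj] at hx
      have h1 := L'.m_nonneg x
      have h2 : |i - j| ≤ |i - s' x| + |j - s' x| := by
        rw [abs_sub_comm j]
        exact abs_sub_le _ _ _
      have h3 : (T.dist x (g (s' x)) : ℤ) = 0 := by
        rw [L'.proj, sub_self, abs_zero]
        omega
      have h4 : x = g (s' x) := hT.connected.dist_eq_zero_iff.1 (by exact_mod_cast h3)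
      rw [h4]
      exact hB _
    have mi : f (s (g i)) ∈ A ∩ B := by
      refine ⟨hA _, mem _ ?_⟩
      rw [T.dist_comm, T.dist_comm (v := g j), L.proj, L.proj, sub_self, abs_zero]
      omega
    have mj : f (s (g j)) ∈ A ∩ B := by
      refine ⟨hA _, mem _ ?_⟩
      rw [T.dist_comm, T.dist_comm (v := g j), L.proj, L.proj, sub_self, abs_zero,
        abs_sub_comm (s (g j))]
      omega
    have h1 : (T.dist (f (s (g j))) (f (s (g i))) : ℕ∞) ≤ setDiam T (A ∩ B) :=
      le_trans (le_iSup₂ (f := fun w (_ : w ∈ A ∩ B) => (T.dist (f (s (g j))) w : ℕ∞)) _ mi)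
        (le_iSup₂ (f := fun v (_ : v ∈ A ∩ B) => ⨆ w ∈ A ∩ B, (T.dist v w : ℕ∞)) _ mj)
    have h2 := lt_of_le_of_lt h1 hN
    rw [← L.isom]
    exact_mod_cast h2

theorem proj_excl (hT : T.IsTree) {f g : ℤ → V} {m s m' s' : V → ℤ}
    (L : LineData T f m s) (L' : LineData T g m' s') (v : V) (h1 : ∀ i, s v ≠ s (g i))
    (h2 : ∀ i, s' v ≠ s' (f i)) : False := by
  apply h2 (s v)
  refine (L'.uniq (m' := m v + m' (f (s v))) (fun t => ?_)).2
  rw [T.dist_comm, L.bridge hT (h1 t)]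
  have := L'.proj (f (s v)) t
  rw [T.dist_comm, L.proj] at this
  omega

end Act

/-- The ping-pong lemma with index set `Bool`, for a group in any universe. -/
theorem ping_pong_bool.{u, v} {G : Type u} [Group G] (a : Bool → G) {α : Type v} [MulAction G α]
    (X Y : Bool → Set α) (hXn : ∀ i, (X i).Nonempty) (hX : ∀ i j, i ≠ j → Disjoint (X i) (X j))
    (hY : ∀ i j, i ≠ j → Disjoint (Y i) (Y j)) (hXY : ∀ i j, Disjoint (X i) (Y j))
    (h1 : ∀ i, a i • (Y i)ᶜ ⊆ X i) (h2 : ∀ i, (a i)⁻¹ • (X i)ᶜ ⊆ Y i) :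
    Function.Injective (FreeGroup.lift a) := by
  have key := FreeGroup.injective_lift_of_ping_pong (ι := ULift.{u} Bool) (fun i => a i.down)
    (fun i => X i.down) (fun i => Y i.down) (fun i => hXn _)
    (fun i j hij => hX _ _ (fun e => hij (ULift.ext _ _ e)))
    (fun i j hij => hY _ _ (fun e => hij (ULift.ext _ _ e)))
    (fun i j => hXY _ _) (fun i => h1 _) (fun i => h2 _)
  have e : FreeGroup.lift a = (FreeGroup.lift (fun i : ULift.{u} Bool => a i.down)).comp
      (FreeGroup.freeGroupCongr (Equiv.ulift.{u} (α := Bool)).symm).toMonoidHom := by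
    ext i
    simp
  rw [e]
  exact key.comp (MulEquiv.injective _)

/-- If `G` acts without edge inversions on a simplicial tree, `h1, h2` are
hyperbolic, `n ≥ 1` and `diam(Axis(h1) ∩ Axis(h2)) < n · min{τ(h1), τ(h2)}`, then `h1^n`
and `h2^n` freely generate a rank 2 free subgroup of `G`. -/
theorem statement7 {G V : Type*} [Group G] [MulAction G V] (T : SimpleGraph V)
    (hT : T.IsTree) (hAct : ActsByAut G T) (hNoInv : NoEdgeInversion G T)
    (h1 h2 : G) (hh1 : IsHyperbolic V h1) (hh2 : IsHyperbolic V h2)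
    (n : ℕ) (hn : 1 ≤ n)
    (hdiam : setDiam T (Axis T h1 ∩ Axis T h2) <
      ((n * min (transLen T h1) (transLen T h2) : ℕ) : ℕ∞)) :
    FreelyGeneratesFreeSubgroup (h1 ^ n) (h2 ^ n) := by
  obtain ⟨hp1, f, m, s, L, hf⟩ := exists_axis hT hAct hNoInv h1 hh1
  obtain ⟨hp2, g, m', s', L', hg⟩ := exists_axis hT hAct hNoInv h2 hh2
  have D1 := proj_diam hT L L' (axis_mem L hf) (axis_mem L' hg) hdiam
  have D2 := proj_diam hT L' L (axis_mem L' hg) (axis_mem L hf) (by rwa [Set.inter_comm] at hdiam)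
  have S1 := proj_shift hT hAct L (pow_per hf n)
  have S2 := proj_shift hT hAct L' (pow_per hg n)
  have B1 : ∀ i j, |s (g i) - s (g j)| < n * (transLen T h1 : ℤ) := fun i j =>
    lt_of_lt_of_le (D1 i j) (by exact_mod_cast Nat.mul_le_mul_left n (min_le_left _ _))
  have B2 : ∀ i j, |s' (f i) - s' (f j)| < n * (transLen T h2 : ℤ) := fun i j =>
    lt_of_lt_of_le (D2 i j) (by exact_mod_cast Nat.mul_le_mul_left n (min_le_right _ _))
  generalize (n : ℤ) * (transLen T h1 : ℤ) = K1 at S1 B1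
  generalize (n : ℤ) * (transLen T h2 : ℤ) = K2 at S2 B2
  have I1 : ∀ v, s v = s ((h1 ^ n)⁻¹ • v) + K1 := fun v => by
    rw [← S1, smul_inv_smul]
  have I2 : ∀ v, s' v = s' ((h2 ^ n)⁻¹ • v) + K2 := fun v => by
    rw [← S2, smul_inv_smul]
  have C1 : ∀ i j, s (g i) - s (g j) < K1 := fun i j => lt_of_le_of_lt (le_abs_self _) (B1 i j)
  have C2 : ∀ i j, s' (f i) - s' (f j) < K2 := fun i j => lt_of_le_of_lt (le_abs_self _) (B2 i j)
  have E := proj_excl hT L L'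
  let X : Bool → Set V := fun b => if b then {v | ∀ i, s (g i) < s v} else {v | ∀ i, s' (f i) < s' v}
  let Y : Bool → Set V := fun b => if b then {v | ∀ i, s v < s (g i)} else {v | ∀ i, s' v < s' (f i)}
  unfold FreelyGeneratesFreeSubgroup
  refine ping_pong_bool _ X Y ?_ ?_ ?_ ?_ ?_ ?_
  · rintro (_ | _)
    · refine ⟨g (s' (f 0) + K2), fun i => ?_⟩
      rw [(L'.self _).2]
      have := C2 i 0
      omega
    · refine ⟨f (s (g 0) + K1), fun i => ?_⟩
      rw [(L.self _).2]
      have := C1 i 0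
      omega
  · rintro (_ | _) (_ | _) hij
    · exact absurd rfl hij
    · exact Set.disjoint_left.2 fun v h h' => E v (fun i => (h' i).ne') (fun i => (h i).ne')
    · exact Set.disjoint_left.2 fun v h h' => E v (fun i => (h i).ne') (fun i => (h' i).ne')
    · exact absurd rfl hij
  · rintro (_ | _) (_ | _) hij
    · exact absurd rfl hij
    · exact Set.disjoint_left.2 fun v h h' => E v (fun i => (h' i).ne) (fun i => (h i).ne)
    · exact Set.disjoint_left.2 fun v h h' => E v (fun i => (h i).ne) (fun i => (h' i).ne)
    · exact absurd rfl hij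
  · rintro (_ | _) (_ | _)
    · exact Set.disjoint_left.2 fun v h h' => lt_asymm (h 0) (h' 0)
    · exact Set.disjoint_left.2 fun v h h' => E v (fun i => (h' i).ne) (fun i => (h i).ne')
    · exact Set.disjoint_left.2 fun v h h' => E v (fun i => (h i).ne') (fun i => (h' i).ne)
    · exact Set.disjoint_left.2 fun v h h' => lt_asymm (h 0) (h' 0)
  · rintro (_ | _) _ ⟨v, hv, rfl⟩
    · have hv : ¬ ∀ i, s' v < s' (f i) := hv
      push Not at hv
      obtain ⟨j, hj⟩ := hv
      intro i
      change s' (f i) < s' (h2 ^ n • v)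
      have := C2 i j
      rw [S2]; omega
    · have hv : ¬ ∀ i, s v < s (g i) := hv
      push Not at hv
      obtain ⟨j, hj⟩ := hv
      intro i
      change s (g i) < s (h1 ^ n • v)
      have := C1 i j
      rw [S1]; omega
  · rintro (_ | _) _ ⟨v, hv, rfl⟩
    · have hv : ¬ ∀ i, s' (f i) < s' v := hv
      push Not at hv
      obtain ⟨j, hj⟩ := hv
      intro i
      change s' ((h2 ^ n)⁻¹ • v) < s' (f i)
      have := C2 j i
      have := I2 v
      omega
    · have hv : ¬ ∀ i, s (g i) < s v := hv
      push Not at hv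
      obtain ⟨j, hj⟩ := hv
      intro i
      change s ((h1 ^ n)⁻¹ • v) < s (g i)
      have := C1 j i
      have := I1 v
      omega
end
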